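/- Let x₀ ∈ ℝ² (the Euclidean plane), R > 0, m ≥ 0, and let φ be a real-valued function, twice continuously differentiable on a neighborhood of the closed ball B̄(x₀,R), satisfying the PDE Δφ(y) = 2·(e^{φ(y)} − e^{−2φ(y)}) for all y ∈ B̄(x₀,R) and the bounds 0 ≤ φ(y) ≤ m for all y ∈ B̄(x₀,R). Then ‖∇φ(x₀)‖ ≤ 2R·(e^{m} − e^{−2m}) + (4/(π·R))·m. -/

import Mathlib

/-- The Euclidean Laplacian on `ℝ²`: the sum of the two pure second partial derivatives. -/
noncomputable def lap2 (u : EuclideanSpace ℝ (Fin 2) → ℝ) (y : EuclideanSpace ℝ (Fin 2)) : ℝ :=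
  ∑ i : Fin 2,
    fderiv ℝ (fun z => fderiv ℝ u z (EuclideanSpace.single i 1)) y (EuclideanSpace.single i 1)

open Set Filter Topology

/-- The second-order necessary condition at a local maximum of a function on `ℝ`. -/
theorem IsLocalMax.second_deriv_nonpos {f f' : ℝ → ℝ} {a c : ℝ} (h : IsLocalMax f a)
    (hf : ∀ᶠ t in 𝓝 a, HasDerivAt f (f' t) t) (hf' : HasDerivAt f' c a) : c ≤ 0 := by
  by_contra! hc
  have hd : deriv f =ᶠ[𝓝 a] f' := hf.mono fun t ht => ht.deriv
  have hdd : deriv (deriv f) a = c := by rw [hd.deriv_eq, hf'.deriv]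
  have hmin : IsLocalMin f a :=
    isLocalMin_of_deriv_deriv_pos (hdd ▸ hc) h.deriv_eq_zero hf.self_of_nhds.continuousAt
  have hconst : f =ᶠ[𝓝 a] fun _ => f a := by
    filter_upwards [h, hmin] with t h1 h2 using le_antisymm h1 h2
  have h0 : deriv (deriv f) a = 0 := by
    rw [hconst.deriv.deriv_eq]
    simp
  linarith

theorem hasDerivAt_quadratic (α β γ s : ℝ) :
    HasDerivAt (fun t : ℝ => α * t ^ 2 + β * t + γ) (2 * α * s + β) s :=
  ((((hasDerivAt_pow 2 s).const_mul α).add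
    ((hasDerivAt_id' s).const_mul β)).add_const γ).congr_deriv (by push_cast; ring)

section Lines

variable {E : Type*} [NormedAddCommGroup E] [NormedSpace ℝ E] {φ : E → ℝ} {U : Set E}

theorem ContDiffOn.hasDerivAt_line (hU : IsOpen U) (hφ : ContDiffOn ℝ 2 φ U) {x d : E} {t : ℝ}
    (ht : x + t • d ∈ U) :
    HasDerivAt (fun t : ℝ => φ (x + t • d)) (fderiv ℝ φ (x + t • d) d) t := by
  have hl : HasDerivAt (fun t : ℝ => x + t • d) d t := by
    simpa using ((hasDerivAt_id t).smul_const d).const_add x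
  exact ((hφ.contDiffAt (hU.mem_nhds ht)).differentiableAt (by norm_num)).hasFDerivAt.comp_hasDerivAt
    t hl

theorem ContDiffOn.differentiableAt_fderiv (hU : IsOpen U) (hφ : ContDiffOn ℝ 2 φ U) {y : E}
    (hy : y ∈ U) : DifferentiableAt ℝ (fderiv ℝ φ) y :=
  ((hφ.contDiffAt (hU.mem_nhds hy)).fderiv_right (m := 1) (by norm_num)).differentiableAt
    (by norm_num)

theorem ContDiffOn.hasDerivAt_fderiv_line (hU : IsOpen U) (hφ : ContDiffOn ℝ 2 φ U) {x d : E}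
    {t : ℝ} (ht : x + t • d ∈ U) :
    HasDerivAt (fun t : ℝ => fderiv ℝ φ (x + t • d) d)
      (fderiv ℝ (fderiv ℝ φ) (x + t • d) d d) t := by
  have hl : HasDerivAt (fun t : ℝ => x + t • d) d t := by
    simpa using ((hasDerivAt_id t).smul_const d).const_add x
  have h1 := (hφ.differentiableAt_fderiv hU ht).hasFDerivAt.comp_hasDerivAt t hl
  simpa using h1.clm_apply (hasDerivAt_const t d)

/-- If `(φ (x + t d) - φ (x' + t d')) / 2` minus a quadratic polynomial has a local maximum in `t`,
then its second derivative there is at most that of the polynomial. -/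
theorem ContDiffOn.second_deriv_le_of_isLocalMax (hU : IsOpen U) (hφ : ContDiffOn ℝ 2 φ U)
    {x d x' d' : E} {t α β γ : ℝ} (ht : x + t • d ∈ U) (ht' : x' + t • d' ∈ U)
    (hmax : IsLocalMax (fun t : ℝ => (φ (x + t • d) - φ (x' + t • d')) / 2
      - (α * t ^ 2 + β * t + γ)) t) :
    (fderiv ℝ (fderiv ℝ φ) (x + t • d) d d - fderiv ℝ (fderiv ℝ φ) (x' + t • d') d' d') / 2
      ≤ 2 * α := by
  have hev : ∀ {z e : E}, z + t • e ∈ U → ∀ᶠ s : ℝ in 𝓝 t, z + s • e ∈ U := fun {z e} h =>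
    (show Continuous fun s : ℝ => z + s • e by fun_prop).continuousAt.eventually (hU.mem_nhds h)
  have hq' : HasDerivAt (fun s : ℝ => 2 * α * s + β) (2 * α) t := by
    simpa using ((hasDerivAt_id t).const_mul (2 * α)).add_const β
  have key := hmax.second_deriv_nonpos (f' := fun s =>
    (fderiv ℝ φ (x + s • d) d - fderiv ℝ φ (x' + s • d') d') / 2 - (2 * α * s + β))
    (by
      filter_upwards [hev ht, hev ht'] with s h1 h2
      exact (((hφ.hasDerivAt_line hU h1).sub (hφ.hasDerivAt_line hU h2)).div_const 2).sub
        (hasDerivAt_quadratic α β γ s))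
    ((((hφ.hasDerivAt_fderiv_line hU ht).sub (hφ.hasDerivAt_fderiv_line hU ht')).div_const 2).sub hq')
  linarith

end Lines

/-- The counterclockwise quarter turn of a vector of the Euclidean plane. -/
noncomputable def quarterTurn (e : EuclideanSpace ℝ (Fin 2)) : EuclideanSpace ℝ (Fin 2) :=
  !₂[-e 1, e 0]

theorem norm_smul_quarterTurn_add_smul_sq {e : EuclideanSpace ℝ (Fin 2)} (he : ‖e‖ = 1) (s t : ℝ) :
    ‖s • quarterTurn e + t • e‖ ^ 2 = s ^ 2 + t ^ 2 := by
  have h : e 0 ^ 2 + e 1 ^ 2 = 1 := by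
    have := EuclideanSpace.real_norm_sq_eq e
    rw [he, Fin.sum_univ_two] at this
    linarith
  rw [EuclideanSpace.real_norm_sq_eq, Fin.sum_univ_two]
  simp only [quarterTurn, PiLp.add_apply, PiLp.smul_apply, smul_eq_mul,
    Matrix.cons_val_zero, Matrix.cons_val_one]
  linear_combination (s ^ 2 + t ^ 2) * h

/-- The Laplacian is the trace of the second derivative in any rotated orthonormal frame. -/
theorem lap2_eq_of_norm_eq_one {φ : EuclideanSpace ℝ (Fin 2) → ℝ} {y e : EuclideanSpace ℝ (Fin 2)}
    (h : DifferentiableAt ℝ (fderiv ℝ φ) y) (he : ‖e‖ = 1) :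
    lap2 φ y = fderiv ℝ (fderiv ℝ φ) y (quarterTurn e) (quarterTurn e)
      + fderiv ℝ (fderiv ℝ φ) y e e := by
  have h1 : e 0 ^ 2 + e 1 ^ 2 = 1 := by
    have := EuclideanSpace.real_norm_sq_eq e
    rw [he, Fin.sum_univ_two] at this
    linarith
  have hcoord : ∀ v : EuclideanSpace ℝ (Fin 2), fderiv ℝ (fun z => fderiv ℝ φ z v) y v
      = fderiv ℝ (fderiv ℝ φ) y v v := fun v => by
    rw [fderiv_clm_apply h (differentiableAt_const v)]
    simp
  have hdecomp : e = e 0 • EuclideanSpace.single 0 1 + e 1 • EuclideanSpace.single 1 1 := by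
    ext i; fin_cases i <;> simp
  have hdecomp' : quarterTurn e
      = (-e 1) • EuclideanSpace.single 0 1 + e 0 • EuclideanSpace.single 1 1 := by
    ext i; fin_cases i <;> simp [quarterTurn]
  rw [hdecomp']
  set a := e 0
  set b := e 1
  rw [hdecomp, lap2, Fin.sum_univ_two, hcoord, hcoord]
  simp only [map_add, map_smul, add_apply, smul_apply,
    smul_eq_mul]
  linear_combination -((fderiv ℝ (fderiv ℝ φ) y (EuclideanSpace.single 0 1)
    (EuclideanSpace.single 0 1)) + fderiv ℝ (fderiv ℝ φ) y (EuclideanSpace.single 1 1)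
    (EuclideanSpace.single 1 1)) * h1

/-- Comparison, on a half-disc, of the odd part of `φ` with a quadratic barrier. -/
theorem odd_part_le_barrier {x₀ : EuclideanSpace ℝ (Fin 2)} {R m N : ℝ} (hR : 0 < R) (hm : 0 ≤ m)
    (hN : 0 ≤ N) {φ : EuclideanSpace ℝ (Fin 2) → ℝ} {U : Set (EuclideanSpace ℝ (Fin 2))}
    (hU : IsOpen U) (hUball : Metric.closedBall x₀ R ⊆ U) (hφ : ContDiffOn ℝ 2 φ U)
    (hlap : ∀ y ∈ Metric.closedBall x₀ R, 0 ≤ lap2 φ y ∧ lap2 φ y < 2 * N)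
    (hlow : ∀ y ∈ Metric.closedBall x₀ R, 0 ≤ φ y)
    (hhigh : ∀ y ∈ Metric.closedBall x₀ R, φ y ≤ m)
    {e : EuclideanSpace ℝ (Fin 2)} (he : ‖e‖ = 1) {s t : ℝ} (hst : s ^ 2 + t ^ 2 ≤ R ^ 2)
    (ht : 0 ≤ t) :
    (φ (x₀ + s • quarterTurn e + t • e) - φ (x₀ + s • quarterTurn e + t • -e)) / 2
      ≤ m / (2 * R ^ 2) * (s ^ 2 - t ^ 2 + 2 * R * t) + N / 2 * (t * (R - t)) := by
  set p := quarterTurn e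
  set c := m / (2 * R ^ 2) with hc
  have hc0 : 0 ≤ c := by positivity
  have hcm : c * R ^ 2 = m / 2 := by rw [hc]; field_simp
  have hball : ∀ s t : ℝ, s ^ 2 + t ^ 2 ≤ R ^ 2 →
      x₀ + s • p + t • e ∈ Metric.closedBall x₀ R := fun s t h => by
    rw [mem_closedBall_iff_norm, add_assoc, add_sub_cancel_left]
    refine abs_le_of_sq_le_sq' ?_ hR.le |>.2
    rwa [norm_smul_quarterTurn_add_smul_sq he]
  have hball' : ∀ s t : ℝ, s ^ 2 + t ^ 2 ≤ R ^ 2 →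
      x₀ + s • p + t • -e ∈ Metric.closedBall x₀ R := fun s t h => by
    rw [smul_neg, ← neg_smul]
    exact hball s (-t) (by simpa using h)
  let v : ℝ × ℝ → ℝ := fun q =>
    (φ (x₀ + q.1 • p + q.2 • e) - φ (x₀ + q.1 • p + q.2 • -e)) / 2
      - (c * (q.1 ^ 2 - q.2 ^ 2 + 2 * R * q.2) + N / 2 * (q.2 * (R - q.2)))
  let K : Set (ℝ × ℝ) := {q | q.1 ^ 2 + q.2 ^ 2 ≤ R ^ 2 ∧ 0 ≤ q.2}
  have hK : IsCompact K := by
    refine ((isCompact_Icc (a := -R) (b := R)).prod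
      (isCompact_Icc (a := -R) (b := R))).of_isClosed_subset ?_ ?_
    · exact (isClosed_le (f := fun q : ℝ × ℝ => q.1 ^ 2 + q.2 ^ 2) (by fun_prop) continuous_const).inter
        (isClosed_le continuous_const continuous_snd)
    · rintro ⟨a, b⟩ ⟨h, -⟩
      simp only at h
      exact ⟨abs_le_of_sq_le_sq' (by nlinarith [sq_nonneg b]) hR.le,
        abs_le_of_sq_le_sq' (by nlinarith [sq_nonneg a]) hR.le⟩
  have hv : ContinuousOn v K := by
    have h1 : ContinuousOn (fun q : ℝ × ℝ => φ (x₀ + q.1 • p + q.2 • e)) K :=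
      hφ.continuousOn.comp (by fun_prop) fun q hq => hUball (hball _ _ hq.1)
    have h2 : ContinuousOn (fun q : ℝ × ℝ => φ (x₀ + q.1 • p + q.2 • -e)) K :=
      hφ.continuousOn.comp (by fun_prop) fun q hq => hUball (hball' _ _ hq.1)
    exact ((h1.sub h2).div_const 2).sub (by fun_prop)
  obtain ⟨⟨a, b⟩, ⟨hab, hb⟩, hmax⟩ := hK.exists_isMaxOn ⟨(s, t), hst, ht⟩ hv
  suffices v (a, b) ≤ 0 by
    have h1 : v (s, t) ≤ v (a, b) := hmax ⟨hst, ht⟩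
    have h2 := h1.trans this
    simp only [v] at h2
    linarith
  simp only at hab hb
  have hbR : b ≤ R := (abs_le_of_sq_le_sq' (by nlinarith [sq_nonneg a]) hR.le).2
  have hb' : 0 ≤ N / 2 * (b * (R - b)) := by
    have := sub_nonneg.2 hbR
    positivity
  rcases hb.eq_or_lt with rfl | hbpos
  · have : 0 ≤ c * a ^ 2 := by positivity
    simp only [v, zero_smul]
    linarith
  rcases hab.eq_or_lt with heq | hlt
  · have h1 := hhigh _ (hball a b hab)
    have h2 := hlow _ (hball' a b hab)
    have h3 : 0 ≤ c * (2 * b * (R - b)) := by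
      have := sub_nonneg.2 hbR
      positivity
    have h4 : c * (a ^ 2 - b ^ 2 + 2 * R * b) = m / 2 + c * (2 * b * (R - b)) := by
      linear_combination c * heq + hcm
    simp only [v]
    linarith
  exfalso
  have hint : K ∈ 𝓝 (a, b) := by
    have h1 : {q : ℝ × ℝ | q.1 ^ 2 + q.2 ^ 2 < R ^ 2} ∈ 𝓝 (a, b) :=
      (isOpen_lt (by fun_prop) continuous_const).mem_nhds hlt
    have h2 : {q : ℝ × ℝ | 0 < q.2} ∈ 𝓝 (a, b) :=
      (isOpen_lt continuous_const continuous_snd).mem_nhds hbpos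
    filter_upwards [h1, h2] with q hq1 hq2 using ⟨le_of_lt hq1, le_of_lt hq2⟩
  have hloc : IsLocalMax v (a, b) := hmax.isLocalMax hint
  have hx := hUball (hball a b hab)
  have hx' := hUball (hball' a b hab)
  have hs : IsLocalMax (fun r : ℝ => (φ ((x₀ + b • e) + r • p) - φ ((x₀ + b • -e) + r • p)) / 2
      - (c * r ^ 2 + 0 * r + (c * (- b ^ 2 + 2 * R * b) + N / 2 * (b * (R - b))))) a := by
    have : IsLocalMax (fun r : ℝ => v (r, b)) a :=
      (show Continuous fun r : ℝ => (r, b) by fun_prop).continuousAt.eventually hloc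
    convert this using 2 with r
    simp only [v, add_right_comm x₀ (r • p)]
    ring
  have htt : IsLocalMax (fun r : ℝ => (φ ((x₀ + a • p) + r • e) - φ ((x₀ + a • p) + r • -e)) / 2
      - ((-c - N / 2) * r ^ 2 + (c * (2 * R) + N / 2 * R) * r + c * a ^ 2)) b := by
    have : IsLocalMax (fun r : ℝ => v (a, r)) b :=
      (show Continuous fun r : ℝ => (a, r) by fun_prop).continuousAt.eventually hloc
    convert this using 2 with r
    simp only [v]
    ring
  have k1 := hφ.second_deriv_le_of_isLocalMax hU (by rwa [add_right_comm])
    (by rwa [add_right_comm]) hs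
  have k2 := hφ.second_deriv_le_of_isLocalMax hU hx hx' htt
  rw [add_right_comm x₀ (b • e), add_right_comm x₀ (b • -e)] at k1
  have l1 := lap2_eq_of_norm_eq_one (hφ.differentiableAt_fderiv hU hx) he
  have l2 := lap2_eq_of_norm_eq_one (hφ.differentiableAt_fderiv hU hx') he
  have l3 := (hlap _ (hball a b hab)).1
  have l4 := (hlap _ (hball' a b hab)).2
  simp only [map_neg, neg_apply, neg_neg] at k2
  linarith

/-- Interior directional-derivative bound for a function with values in `[0, m]` and Laplacian in
`[0, 2N)`. -/
theorem fderiv_apply_le_of_lap2_bounds {x₀ : EuclideanSpace ℝ (Fin 2)} {R m N : ℝ} (hR : 0 < R)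
    (hm : 0 ≤ m) (hN : 0 ≤ N) {φ : EuclideanSpace ℝ (Fin 2) → ℝ}
    {U : Set (EuclideanSpace ℝ (Fin 2))}
    (hU : IsOpen U) (hUball : Metric.closedBall x₀ R ⊆ U) (hφ : ContDiffOn ℝ 2 φ U)
    (hlap : ∀ y ∈ Metric.closedBall x₀ R, 0 ≤ lap2 φ y ∧ lap2 φ y < 2 * N)
    (hlow : ∀ y ∈ Metric.closedBall x₀ R, 0 ≤ φ y)
    (hhigh : ∀ y ∈ Metric.closedBall x₀ R, φ y ≤ m)
    {e : EuclideanSpace ℝ (Fin 2)} (he : ‖e‖ = 1) :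
    fderiv ℝ φ x₀ e ≤ m / R + N * R / 2 := by
  have hx : x₀ ∈ U := hUball (Metric.mem_closedBall_self hR.le)
  have h0 : ∀ d : EuclideanSpace ℝ (Fin 2),
      HasDerivAt (fun t : ℝ => φ (x₀ + t • d)) (fderiv ℝ φ x₀ d) 0 := fun d => by
    simpa using hφ.hasDerivAt_line hU (x := x₀) (d := d) (t := 0) (by simpa using hx)
  have hq : HasDerivAt (fun t : ℝ => m / (2 * R ^ 2) * (- t ^ 2 + 2 * R * t)
      + N / 2 * (t * (R - t))) (m / R + N * R / 2) 0 := by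
    have h := hasDerivAt_quadratic (-(m / (2 * R ^ 2)) - N / 2) (m / R + N * R / 2) 0 0
    convert h using 1
    · ext t
      field_simp
      ring
    · ring
  have hg := hq.sub (((h0 e).sub (h0 (-e))).div_const 2)
  have hnonneg : 0 ≤ m / R + N * R / 2 - (fderiv ℝ φ x₀ e - fderiv ℝ φ x₀ (-e)) / 2 := by
    refine ge_of_tendsto hg.tendsto_slope_zero_right ?_
    filter_upwards [Ioc_mem_nhdsGT hR] with t ht
    have := odd_part_le_barrier hR hm hN hU hUball hφ hlap hlow hhigh he (s := 0) (t := t)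
      (by nlinarith [ht.1, ht.2]) ht.1.le
    simp only [zero_smul, add_zero, ne_eq, OfNat.ofNat_ne_zero, not_false_eq_true, zero_pow,
      zero_sub, smul_neg] at this
    refine smul_nonneg (inv_nonneg.2 ht.1.le) ?_
    simp
    linarith
  rw [map_neg] at hnonneg
  linarith

theorem stmt11 (x₀ : EuclideanSpace ℝ (Fin 2)) (R : ℝ) (hR : 0 < R)
    (m : ℝ) (hm : 0 ≤ m)
    (φ : EuclideanSpace ℝ (Fin 2) → ℝ)
    (U : Set (EuclideanSpace ℝ (Fin 2))) (hU : IsOpen U)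
    (hUball : Metric.closedBall x₀ R ⊆ U)
    (hφ : ContDiffOn ℝ 2 φ U)
    (hpde : ∀ y ∈ Metric.closedBall x₀ R,
      lap2 φ y = 2 * (Real.exp (φ y) - Real.exp (-2 * φ y)))
    (hlow : ∀ y ∈ Metric.closedBall x₀ R, 0 ≤ φ y)
    (hhigh : ∀ y ∈ Metric.closedBall x₀ R, φ y ≤ m) :
    ‖gradient φ x₀‖ ≤
      2 * R * (Real.exp m - Real.exp (-2 * m)) + 4 / (Real.pi * R) * m := by
  set M := Real.exp m - Real.exp (-2 * m)
  have hM : 0 ≤ M := sub_nonneg.2 (Real.exp_le_exp.2 (by linarith))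
  have hdir : ∀ e : EuclideanSpace ℝ (Fin 2), ‖e‖ = 1 → fderiv ℝ φ x₀ e ≤ m / R + M * R / 2 := by
    intro e he
    refine le_of_forall_pos_le_add fun ε hε => ?_
    have hδ : 0 < 2 * ε / R := by positivity
    refine (fderiv_apply_le_of_lap2_bounds (N := M + 2 * ε / R) hR hm (by positivity) hU hUball hφ
      (fun y hy => ?_) hlow hhigh he).trans_eq ?_
    · have h1 := hlow y hy
      have h2 := hhigh y hy
      have h3 : Real.exp (-2 * φ y) ≤ Real.exp (φ y) := Real.exp_le_exp.2 (by linarith)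
      have h4 : Real.exp (φ y) ≤ Real.exp m := Real.exp_le_exp.2 h2
      have h5 : Real.exp (-2 * m) ≤ Real.exp (-2 * φ y) := Real.exp_le_exp.2 (by linarith)
      rw [hpde y hy]
      exact ⟨by linarith, by simp only [M]; linarith⟩
    · field_simp
      ring
  have hnorm : ‖gradient φ x₀‖ = ‖fderiv ℝ φ x₀‖ :=
    (InnerProductSpace.toDual ℝ _).symm.norm_map _
  have hle : ‖fderiv ℝ φ x₀‖ ≤ m / R + M * R / 2 := by
    refine ContinuousLinearMap.opNorm_le_of_unit_norm (by positivity) fun e he => ?_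
    rw [Real.norm_eq_abs, abs_le']
    exact ⟨hdir e he, by simpa only [map_neg] using hdir (-e) ((norm_neg e).trans he)⟩
  have hpi : m / R ≤ 4 / (Real.pi * R) * m := by
    rw [div_mul_eq_mul_div, div_le_div_iff₀ hR (by positivity)]
    nlinarith [mul_nonneg (mul_nonneg hm hR.le) (sub_nonneg.2 Real.pi_le_four)]
  have hMR : 0 ≤ M * R := by positivity
  rw [hnorm]
  nlinarith
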